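/- Let μ be a finite positive Borel measure on [0,1] and define G(ξ) := −ξ·∫_0^1 dμ(z)/(1+zξ). For all integers L, M with L ≥ M ≥ 0, there exist real polynomials P and Q with deg P ≤ L, deg Q ≤ M and Q(0) = 1, such that G(ξ) − P(ξ)/Q(ξ) = O(ξ^{L+M+1}) as ξ → 0 in ℂ. -/

import Mathlib

/-!
Write `m n = ∫ zⁿ dμ` over `[0,1]`.  Expanding the geometric series, the Taylor polynomial of `G`
to order `L + M` is `T = ∑_{n < L+M} -(-1)ⁿ m n X^(n+1)`, with an error that is `O(ξ^(L+M+1))`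
(`G_sub_taylor_isBigO`).  It is therefore enough to find `Q` with `Q(0) = 1`, `deg Q ≤ M`, such that
the coefficients of `T Q` in degrees `L+1, …, L+M` vanish; `P` is then the part of `T Q` of degree
at most `L`.

After reversing `Q` and alternating its signs, these `M` equations say that a *monic* polynomial
`R` of degree `M` is orthogonal to `1, z, …, z^(M-1)` for the positive semidefinite form
`(p, q) ↦ ∫ p q z^(L-M) dμ`; here `M ≤ L` is what makes the weight a genuine polynomial.  Such an
`R` exists even when the form is degenerate (that is, when `μ` has few atoms): in `L²`, subtract
from `z^M` its orthogonal projection onto the span of the lower powers (`exists_monic_orthogonal`).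
-/

open MeasureTheory Polynomial Filter Asymptotics

/-- The residual of the orthogonal projection of `v M` onto the span of `v 0, …, v (M-1)`, written
as a combination of the `v j` with leading coefficient `1`.  The `v j` may be linearly
dependent. -/
lemma exists_orthogonal_combination {E : Type*} [NormedAddCommGroup E] [InnerProductSpace ℝ E]
    (v : ℕ → E) (M : ℕ) :
    ∃ d : ℕ → ℝ, d M = 1 ∧
      ∀ i < M, ∑ j ∈ Finset.range (M + 1), d j * inner ℝ (v i) (v j) = 0 := by
  let K : Submodule ℝ E := Submodule.span ℝ (Set.range fun i : Fin M => v i)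
  have : FiniteDimensional ℝ K := FiniteDimensional.span_of_finite ℝ (Set.finite_range _)
  obtain ⟨c, hc⟩ := (Submodule.mem_span_range_iff_exists_fun ℝ).1 (K.starProjection_apply_mem (v M))
  refine ⟨fun j => if h : j < M then -c ⟨j, h⟩ else 1, by simp, fun i hi => ?_⟩
  have hperp : inner ℝ (v i) (v M - K.starProjection (v M)) = 0 :=
    (Submodule.mem_orthogonal _ _).1 (K.sub_starProjection_mem_orthogonal (v M)) _
      (Submodule.subset_span ⟨⟨i, hi⟩, rfl⟩)
  rw [← hc, inner_sub_right, inner_sum] at hperp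
  rw [Finset.sum_range_succ, Finset.sum_range]
  simp only [inner_smul_right] at hperp
  simp
  linarith

/-- Existence of a monic orthogonal polynomial `∑ d j z^j` of degree `M` for the weight `z^e dμ` on
`[0,1]`, in terms of moments. -/
lemma exists_monic_orthogonal (μ : Measure ℝ) [IsFiniteMeasure μ] (e M : ℕ) :
    ∃ d : ℕ → ℝ, d M = 1 ∧ ∀ i < M, ∑ j ∈ Finset.range (M + 1),
      d j * ∫ z in Set.Icc (0:ℝ) 1, z ^ (e + i + j) ∂μ = 0 := by
  -- The weight is split symmetrically: `z^i √z^e` has Gram matrix `∫ z^(e+i+j)`.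
  have hmem : ∀ i : ℕ, MemLp (fun z : ℝ => z ^ i * √z ^ e) 2 (μ.restrict (Set.Icc (0:ℝ) 1)) := by
    intro i
    refine MemLp.of_bound (by fun_prop) 1 ?_
    filter_upwards [ae_restrict_mem measurableSet_Icc] with z hz
    have h1 : √z ≤ 1 := Real.sqrt_le_one.2 hz.2
    rw [Real.norm_of_nonneg (mul_nonneg (pow_nonneg hz.1 _) (by positivity))]
    exact mul_le_one₀ (pow_le_one₀ hz.1 hz.2) (by positivity)
      (pow_le_one₀ (Real.sqrt_nonneg _) h1)
  obtain ⟨d, hd, h⟩ := exists_orthogonal_combination (fun i => (hmem i).toLp) M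
  refine ⟨d, hd, fun i hi => ?_⟩
  refine Eq.trans ?_ (h i hi)
  refine Finset.sum_congr rfl fun j _ => ?_
  congr 1
  rw [L2.inner_def (𝕜 := ℝ)]
  refine integral_congr_ae ?_
  filter_upwards [ae_restrict_mem measurableSet_Icc, (hmem i).coeFn_toLp, (hmem j).coeFn_toLp]
    with z hz hi hj
  rw [hi, hj]
  have hs : √z ^ e * √z ^ e = z ^ e := by rw [← mul_pow, Real.mul_self_sqrt hz.1]
  simp only [RCLike.inner_apply, conj_trivial]
  rw [pow_add, pow_add, ← hs]
  ring

/-- The Taylor polynomial of degree `N` at `0` of `-ξ ∫ dμ(z)/(1 + zξ)`, for moments `m`. -/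
noncomputable def taylorG (m : ℕ → ℝ) (N : ℕ) : ℝ[X] :=
  ∑ n ∈ Finset.range N, C (-(-1) ^ n * m n) * X ^ (n + 1)

lemma taylorG_coeff_succ (m : ℕ → ℝ) {N n : ℕ} (hn : n < N) :
    (taylorG m N).coeff (n + 1) = -(-1) ^ n * m n := by
  simp only [taylorG, finsetSum_coeff, coeff_C_mul, coeff_X_pow, add_left_inj]
  simp [hn]

lemma G_sub_taylor_isBigO (μ : Measure ℝ) [IsFiniteMeasure μ] (N : ℕ) :
    (fun ξ : ℂ => (-ξ * ∫ z in Set.Icc (0:ℝ) 1, (1 + (z : ℂ) * ξ)⁻¹ ∂μ) -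
        aeval ξ (taylorG (fun n => ∫ z in Set.Icc (0:ℝ) 1, z ^ n ∂μ) N))
      =O[nhds (0 : ℂ)] fun ξ : ℂ => ξ ^ (N + 1) := by
  set ν := μ.restrict (Set.Icc (0:ℝ) 1) with hν
  refine IsBigO.of_bound (2 * ν.real Set.univ) ?_
  filter_upwards [Metric.ball_mem_nhds (0:ℂ) (by norm_num : (0:ℝ) < 1 / 2)] with ξ hξ
  have hξ' : ‖ξ‖ < 1 / 2 := by simpa using hξ
  have hz : ∀ᵐ z ∂ν, z ∈ Set.Icc (0:ℝ) 1 := ae_restrict_mem measurableSet_Icc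
  have hzξ : ∀ z ∈ Set.Icc (0:ℝ) 1, ‖(z:ℂ) * ξ‖ ≤ ‖ξ‖ := fun z hz => by
    rw [norm_mul, Complex.norm_real, Real.norm_of_nonneg hz.1]
    exact mul_le_of_le_one_left (norm_nonneg _) hz.2
  have hlow : ∀ z ∈ Set.Icc (0:ℝ) 1, (1:ℝ) / 2 ≤ ‖1 + (z:ℂ) * ξ‖ := fun z hz => by
    have h1 := norm_sub_le (1 + (z:ℂ) * ξ) ((z:ℂ) * ξ)
    have h2 := hzξ z hz
    simp only [add_sub_cancel_right, norm_one] at h1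
    linarith
  have hinv : ∀ z ∈ Set.Icc (0:ℝ) 1, ‖(1 + (z:ℂ) * ξ)⁻¹‖ ≤ 2 := fun z hz => by
    rw [norm_inv]
    calc _ ≤ ((1:ℝ) / 2)⁻¹ := inv_anti₀ (by norm_num) (hlow z hz)
      _ = 2 := by norm_num
  have hint : Integrable (fun z : ℝ => (1 + (z:ℂ) * ξ)⁻¹) ν := by
    refine Integrable.of_bound (Measurable.aestronglyMeasurable (by fun_prop)) 2 ?_
    filter_upwards [hz] with z hz using hinv z hz
  have hintp : ∀ n : ℕ, Integrable (fun z : ℝ => (-((z:ℂ) * ξ)) ^ n) ν := fun n => by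
    refine Integrable.of_bound (Measurable.aestronglyMeasurable (by fun_prop)) 1 ?_
    filter_upwards [hz] with z hz
    rw [norm_pow, norm_neg]
    exact pow_le_one₀ (norm_nonneg _) (by linarith [hzξ z hz])
  have htaylor : aeval ξ (taylorG (fun n => ∫ z, z ^ n ∂ν) N) =
      -ξ * ∫ z, ∑ n ∈ Finset.range N, (-((z:ℂ) * ξ)) ^ n ∂ν := by
    rw [integral_finsetSum _ fun n _ => hintp n, taylorG, map_sum, Finset.mul_sum]
    refine Finset.sum_congr rfl fun n _ => ?_
    have h1 : (fun z : ℝ => (-((z:ℂ) * ξ)) ^ n) =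
        fun z : ℝ => ((z ^ n : ℝ) : ℂ) * (-ξ) ^ n := by
      funext z; push_cast; rw [← mul_pow]; ring
    rw [h1, integral_mul_const, integral_complex_ofReal, neg_pow ξ n]
    simp
    ring
  have hrem : ∀ z ∈ Set.Icc (0:ℝ) 1,
      (1 + (z:ℂ) * ξ)⁻¹ - ∑ n ∈ Finset.range N, (-((z:ℂ) * ξ)) ^ n =
        (-((z:ℂ) * ξ)) ^ N * (1 + (z:ℂ) * ξ)⁻¹ := fun z hz => by
    have h0 : 1 + (z:ℂ) * ξ ≠ 0 := by
      have := hlow z hz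
      intro h
      rw [h, norm_zero] at this
      norm_num at this
    have h2 := geom_sum_mul_neg (-((z:ℂ) * ξ)) N
    rw [sub_neg_eq_add] at h2
    field_simp
    linear_combination -h2
  rw [htaylor, ← mul_sub, ← integral_sub hint (integrable_finsetSum _ fun n _ => hintp n),
    norm_mul, norm_neg, norm_pow]
  have hb : ‖∫ z, ((1 + (z:ℂ) * ξ)⁻¹ - ∑ n ∈ Finset.range N, (-((z:ℂ) * ξ)) ^ n) ∂ν‖ ≤
      (‖ξ‖ ^ N * 2) * ν.real Set.univ := by
    refine norm_integral_le_of_norm_le_const ?_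
    filter_upwards [hz] with z hz
    rw [hrem z hz, norm_mul, norm_pow, norm_neg]
    exact mul_le_mul (pow_le_pow_left₀ (norm_nonneg _) (hzξ z hz) _) (hinv z hz)
      (norm_nonneg _) (by positivity)
  calc _ ≤ ‖ξ‖ * ((‖ξ‖ ^ N * 2) * ν.real Set.univ) := by gcongr
    _ = _ := by ring

/-- The linear system behind the Padé denominator: `Q` is the sign-alternated reversal of the monic
orthogonal polynomial for the weight `z^(L-M) dμ`. -/
lemma exists_denominator (μ : Measure ℝ) [IsFiniteMeasure μ] (L M : ℕ) (hLM : M ≤ L) :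
    ∃ Q : ℝ[X], Q.natDegree ≤ M ∧ Q.coeff 0 = 1 ∧ ∀ k, L < k → k ≤ L + M →
      (taylorG (fun n => ∫ z in Set.Icc (0:ℝ) 1, z ^ n ∂μ) (L + M) * Q).coeff k = 0 := by
  obtain ⟨e, rfl⟩ := Nat.exists_eq_add_of_le hLM
  obtain ⟨d, hd, h⟩ := exists_monic_orthogonal μ e M
  refine ⟨∑ j ∈ Finset.range (M + 1), C ((-1) ^ (M - j) * d j) * X ^ (M - j), ?_, ?_, ?_⟩
  · refine natDegree_sum_le_of_forall_le _ _ fun j _ => ?_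
    exact (natDegree_C_mul_X_pow_le _ _).trans (Nat.sub_le _ _)
  · rw [finsetSum_coeff, Finset.sum_range_succ, Finset.sum_eq_zero]
    · simp [hd]
    · intro j hj
      have : M - j ≠ 0 := by have := Finset.mem_range.1 hj; omega
      rw [coeff_C_mul, coeff_X_pow, if_neg this.symm, mul_zero]
  · intro k hk hk'
    obtain ⟨i, rfl⟩ : ∃ i, k = M + e + i + 1 := ⟨k - (M + e + 1), by omega⟩
    have key := h i (by omega)
    rw [Finset.mul_sum, finsetSum_coeff]
    refine Eq.trans ?_ (mul_eq_zero_of_right (-(-1 : ℝ) ^ (M + e + i)) key)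
    rw [Finset.mul_sum]
    refine Finset.sum_congr rfl fun j hj => ?_
    have hj := Finset.mem_range.1 hj
    rw [mul_left_comm, coeff_C_mul, coeff_mul_X_pow', if_pos (by omega),
      show M + e + i + 1 - (M - j) = (e + i + j) + 1 by omega, taylorG_coeff_succ _ (by omega),
      show M + e + i = (M - j) + (e + i + j) by omega, pow_add (-1 : ℝ)]
    ring

/-- **Existence of standard `[L/M]` Padé approximants for `G(ξ) = -ξ·∫₀¹ dμ(z)/(1+zξ)`.**
For a finite positive Borel measure `μ` on `[0,1]` and integers `L ≥ M ≥ 0`, there exist real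
polynomials `P`, `Q` with `deg P ≤ L`, `deg Q ≤ M`, `Q(0) = 1`, such that
`G(ξ) - P(ξ)/Q(ξ) = O(ξ^{L+M+1})` as `ξ → 0` in `ℂ`. -/
theorem pade_exists_G
    (μ : Measure ℝ) [IsFiniteMeasure μ] (L M : ℕ) (hLM : M ≤ L) :
    ∃ P Q : Polynomial ℝ,
      P.natDegree ≤ L ∧ Q.natDegree ≤ M ∧ Q.coeff 0 = 1 ∧
      (fun ξ : ℂ =>
          (-ξ * ∫ z in Set.Icc (0:ℝ) 1, (1 + (z : ℂ) * ξ)⁻¹ ∂μ) -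
            Polynomial.aeval ξ P / Polynomial.aeval ξ Q)
        =O[nhds (0 : ℂ)] fun ξ : ℂ => ξ ^ (L + M + 1) := by
  obtain ⟨Q, hQdeg, hQ0, hQ⟩ := exists_denominator μ L M hLM
  set T := taylorG (fun n => ∫ z in Set.Icc (0:ℝ) 1, z ^ n ∂μ) (L + M) with hT
  let P : ℝ[X] := ∑ k ∈ Finset.range (L + 1), C ((T * Q).coeff k) * X ^ k
  have hP : ∀ k, P.coeff k = if k < L + 1 then (T * Q).coeff k else 0 := fun k => by
    simp [P, coeff_X_pow]
  obtain ⟨S, hS⟩ : X ^ (L + M + 1) ∣ T * Q - P := by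
    refine X_pow_dvd_iff.2 fun k hk => ?_
    rw [coeff_sub, hP]
    split_ifs with h
    · simp
    · rw [hQ k (by omega) (by omega), sub_zero]
  refine ⟨P, Q, ?_, hQdeg, hQ0, ?_⟩
  · refine natDegree_le_iff_coeff_eq_zero.2 fun k hk => ?_
    rw [hP, if_neg (by omega)]
  have hQ0' : aeval (0:ℂ) Q ≠ 0 := by
    rw [← coeff_zero_eq_aeval_zero', hQ0]
    simp
  have hcQ : ContinuousAt (fun ξ : ℂ => aeval ξ Q) 0 := Q.continuous_aeval.continuousAt
  have hcS : ContinuousAt (fun ξ : ℂ => aeval ξ S / aeval ξ Q) 0 :=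
    S.continuous_aeval.continuousAt.div hcQ hQ0'
  have hrest : (fun ξ : ℂ => ξ ^ (L + M + 1) * (aeval ξ S / aeval ξ Q))
      =O[nhds (0 : ℂ)] fun ξ : ℂ => ξ ^ (L + M + 1) := by
    simpa using (isBigO_refl (fun ξ : ℂ => ξ ^ (L + M + 1)) (nhds 0)).mul
      (hcS.tendsto.isBigO_one ℂ)
  refine ((G_sub_taylor_isBigO μ (L + M)).add hrest).congr' ?_ EventuallyEq.rfl
  filter_upwards [hcQ.eventually_ne hQ0'] with ξ hξ
  have h := congrArg (aeval ξ) hS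
  simp only [map_sub, map_mul, map_pow, aeval_X] at h
  rw [← mul_div_assoc, ← h, ← hT]
  field_simp
  ring
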